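/- arXiv:2603.02054 — 2 statements merged into one kernel-verified Lean document; each statement's English description precedes it below -/
import Mathlib

section
/- Assume d1 < x_T < d2 and that x⁰_{x,s}(t) ∈ (d1,d2) for every x ∈ (d1,d2), every 0 ≤ s < T and every t ∈ [s,T]. Then for each T' ∈ [0,T), the function u is Lipschitz continuous on (d1,d2)×[0,T']: there exists a constant L < ∞ such that |u(x1,s1) − u(x2,s2)| ≤ L·(|x1−x2| + |s1−s2|) for all (x1,s1), (x2,s2) ∈ (d1,d2)×[0,T']. -/
/-!
With `m y = sinh (a1 * y) / a1`, the two-point cost equals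
`N ^ 2 / (2 * m (T - s) * m (T - t) * m (t - s))`, where, writing `c = a0 / a1`,
`N = (d + c) * m (T - s) - (x + c) * m (T - t) - (xT + c) * m (t - s)`. On `[0, T]` the function
`m` dominates the identity and is Lipschitz, and nothing else about `m` is needed.

The cost itself is not Lipschitz uniformly in `t`, because of the singularity at `t = s`. The
infimum is nevertheless Lipschitz, for these reasons. A time `t` with `t - s` proportional to
`|d - x|` shows that the infimum is at most a constant times `|d - x|` (`uval_le_dist`), so in
particular it is bounded. On the other hand the cost is at least a constant times
`|d - x| ^ 2 / (t - s)` when `t - s` is small compared with `|d - x|`, and symmetrically at least a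
constant divided by `T - t` when `t` is close to `T`, since `d ≠ xT` (`action_lower`). Hence only
times with `t - s` at least a multiple of `|d - x|` and `T - t` bounded below compete. For these,
moving `(x, s)` by less than `t - s` while keeping `t - s` fixed changes the cost by at most a
constant times the displacement (`action_shift`), since there `N` is of order `t - s`. A larger
displacement is already covered by the linear bound on the infimum.
-/

/-- The deterministic trajectory `x⁰_{x,s}`. -/
noncomputable def traj (a0 a1 T xT x s t : ℝ) : ℝ :=
  (x + a0 / a1) * Real.sinh (a1 * (T - t)) / Real.sinh (a1 * (T - s)) +
    (xT + a0 / a1) * Real.sinh (a1 * (t - s)) / Real.sinh (a1 * (T - s)) - a0 / a1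

/-- The two-point cost `u(x,s;d,t)`. -/
noncomputable def cost (a0 a1 T xT x s d t : ℝ) : ℝ :=
  a1 * Real.sinh (a1 * (T - s)) * (d - traj a0 a1 T xT x s t) ^ 2 /
    (2 * Real.sinh (a1 * (T - t)) * Real.sinh (a1 * (t - s)))

/-- The exit cost `u(x,s) = inf { u(x,s;d,t) : d ∈ {d1,d2}, t ∈ (s,T) }`. -/
noncomputable def uval (a0 a1 T xT d1 d2 x s : ℝ) : ℝ :=
  sInf {r : ℝ | ∃ d, (d = d1 ∨ d = d2) ∧ ∃ t ∈ Set.Ioo s T, r = cost a0 a1 T xT x s d t}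

/-! ### The kernel `sinh (a1 * y) / a1` and the cost in symmetric form -/

/-- The properties of `m y = sinh (a1 * y) / a1` used below: `m` vanishes at `0`, and on `[0, T]` it
dominates the identity and is Lipschitz with constant `M`, where `1 ≤ M`. -/
structure SinhLike (m : ℝ → ℝ) (T M : ℝ) : Prop where
  one_le : 1 ≤ M
  zero : m 0 = 0
  low : ∀ y, 0 ≤ y → y ≤ T → y ≤ m y
  lip : ∀ y z, 0 ≤ y → y ≤ T → 0 ≤ z → z ≤ T → |m y - m z| ≤ M * |y - z|

theorem SinhLike.up {m : ℝ → ℝ} {T M : ℝ} (h : SinhLike m T M) {y : ℝ} (h0 : 0 ≤ y) (h1 : y ≤ T) :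
    m y ≤ M * y := by
  have := h.lip y 0 h0 h1 le_rfl (h0.trans h1)
  rw [h.zero, sub_zero, sub_zero, abs_of_nonneg h0] at this
  exact (le_abs_self _).trans this

theorem sinhLike_sinh {a T : ℝ} (ha : a ≠ 0) :
    SinhLike (fun y => Real.sinh (a * y) / a) T (Real.cosh (a * T)) := by
  refine ⟨Real.one_le_cosh _, by simp, fun y h0 _ => ?_, fun y z hy hyT hz hzT => ?_⟩
  · rcases lt_or_gt_of_ne ha with h | h
    · rw [le_div_iff_of_neg h, mul_comm a y]
      exact Real.sinh_le_self_iff.2 (mul_nonpos_of_nonneg_of_nonpos h0 h.le)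
    · rw [le_div_iff₀ h, mul_comm]
      exact Real.self_le_sinh_iff.2 (mul_nonneg h.le h0)
  · have hd : ∀ w ∈ Set.Icc (0 : ℝ) T,
        HasDerivWithinAt (fun y => Real.sinh (a * y) / a) (Real.cosh (a * w)) (Set.Icc 0 T) w := by
      intro w _
      have h1 : HasDerivAt (fun y : ℝ => a * y) a w := by
        simpa using (hasDerivAt_id w).const_mul a
      have h2 := (h1.sinh).div_const a
      rw [mul_div_cancel_right₀ _ ha] at h2
      exact h2.hasDerivWithinAt
    have := (convex_Icc (0 : ℝ) T).norm_image_sub_le_of_norm_hasDerivWithin_le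
      (C := Real.cosh (a * T)) hd (fun w hw => by
        rw [Real.norm_eq_abs, abs_of_pos (Real.cosh_pos _), Real.cosh_le_cosh, abs_mul, abs_mul,
          abs_of_nonneg hw.1, abs_of_nonneg (hw.1.trans hw.2)]
        exact mul_le_mul_of_nonneg_left hw.2 (abs_nonneg _)) ⟨hz, hzT⟩ ⟨hy, hyT⟩
    simpa [Real.norm_eq_abs] using this

/-- The quantity whose square is the numerator of the cost; here `σ = T - t` and `τ = t - s` are
the times left after and before the exit, and `P`, `X`, `Q` are the exit, initial and terminal
points, all shifted by `a0 / a1`. -/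
def gap (m : ℝ → ℝ) (P X Q σ τ : ℝ) : ℝ := P * m (σ + τ) - X * m σ - Q * m τ

/-- The denominator of the cost, in terms of `σ = T - t` and `τ = t - s`. -/
def den (m : ℝ → ℝ) (σ τ : ℝ) : ℝ := 2 * m (σ + τ) * m σ * m τ

/-- The cost in the variables `σ = T - t`, `τ = t - s`. -/
noncomputable def action (m : ℝ → ℝ) (P X Q σ τ : ℝ) : ℝ := gap m P X Q σ τ ^ 2 / den m σ τ

/-- Time reversal: the cost is symmetric under exchanging the two endpoints. -/
theorem action_symm (m : ℝ → ℝ) (P X Q σ τ : ℝ) : action m P X Q σ τ = action m P Q X τ σ := by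
  unfold action gap den
  rw [add_comm τ σ]
  congr 1 <;> ring

theorem cost_eq_action {a0 a1 T xT x s d t : ℝ} (ha : a1 ≠ 0) (hs : s < t) (ht : t < T) :
    cost a0 a1 T xT x s d t = action (fun y => Real.sinh (a1 * y) / a1)
      (d + a0 / a1) (x + a0 / a1) (xT + a0 / a1) (T - t) (t - s) := by
  have e : T - t + (t - s) = T - s := by ring
  have hne : ∀ y : ℝ, 0 < y → Real.sinh (a1 * y) ≠ 0 := fun y hy => by
    rw [Ne, Real.sinh_eq_zero]; exact mul_ne_zero ha hy.ne'
  have h1 := hne (T - s) (by linarith)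
  have h2 := hne (T - t) (by linarith)
  have h3 := hne (t - s) (by linarith)
  unfold cost action gap den traj
  rw [e]
  dsimp only
  generalize Real.sinh (a1 * (T - s)) = A at *
  generalize Real.sinh (a1 * (T - t)) = B at *
  generalize Real.sinh (a1 * (t - s)) = C at *
  generalize a0 / a1 = c
  field_simp
  ring

/-! ### Estimates for the cost -/

section Estimates

variable {m : ℝ → ℝ} {T M R ℓ P X Q σ τ : ℝ}

theorem den_le (h : SinhLike m T M) (hσ : 0 < σ) (hτ : 0 < τ) (hT : σ + τ ≤ T) :
    den m σ τ ≤ 2 * M ^ 3 * T ^ 2 * τ := by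
  have hM := h.one_le
  have a1 := h.low (σ + τ) (by linarith) hT
  have a2 := h.low σ hσ.le (by linarith)
  have a3 := h.low τ hτ.le (by linarith)
  have b1 : m (σ + τ) ≤ M * T := (h.up (by linarith) hT).trans (by gcongr)
  have b2 : m σ ≤ M * T := (h.up hσ.le (by linarith)).trans (by gcongr; linarith)
  have b3 := h.up hτ.le (by linarith)
  have hT0 : 0 < T := by linarith
  unfold den
  calc 2 * m (σ + τ) * m σ * m τ ≤ 2 * (M * T) * (M * T) * (M * τ) := by
        gcongr <;> linarith
    _ = _ := by ring

theorem le_den (h : SinhLike m T M) (hσ : 0 < σ) (hτ : 0 < τ) (hT : σ + τ ≤ T) :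
    2 * (σ + τ) * σ * τ ≤ den m σ τ := by
  have a1 := h.low (σ + τ) (by linarith) hT
  have a2 := h.low σ hσ.le (by linarith)
  have a3 := h.low τ hτ.le (by linarith)
  have p1 : 0 < m (σ + τ) := by linarith
  have p2 : 0 < m σ := by linarith
  unfold den
  gcongr

theorem den_pos (h : SinhLike m T M) (hσ : 0 < σ) (hτ : 0 < τ) (hT : σ + τ ≤ T) :
    0 < den m σ τ :=
  lt_of_lt_of_le (by positivity) (le_den h hσ hτ hT)

theorem action_nonneg (h : SinhLike m T M) (hσ : 0 < σ) (hτ : 0 < τ) (hT : σ + τ ≤ T) :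
    0 ≤ action m P X Q σ τ :=
  div_nonneg (sq_nonneg _) (den_pos h hσ hτ hT).le

theorem gap_close (h : SinhLike m T M) (hσ : 0 < σ) (hτ : 0 < τ) (hT : σ + τ ≤ T)
    (hX : |X| ≤ R) (hQ : |Q| ≤ R) :
    |gap m P X Q σ τ - (P - X) * m (σ + τ)| ≤ 2 * R * M * τ := by
  have hM := h.one_le
  have hR : 0 ≤ R := (abs_nonneg _).trans hX
  have e : gap m P X Q σ τ - (P - X) * m (σ + τ) = X * (m (σ + τ) - m σ) - Q * m τ := by
    unfold gap; ring
  have l := h.lip (σ + τ) σ (by linarith) hT hσ.le (by linarith)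
  rw [show σ + τ - σ = τ by ring, abs_of_pos hτ] at l
  have b3 := h.up hτ.le (by linarith)
  have a3 := h.low τ hτ.le (by linarith)
  have b4 : |m τ| ≤ M * τ := by rw [abs_of_nonneg (by linarith)]; exact b3
  rw [e]
  calc |X * (m (σ + τ) - m σ) - Q * m τ| ≤ |X * (m (σ + τ) - m σ)| + |Q * m τ| := abs_sub _ _
    _ = |X| * |m (σ + τ) - m σ| + |Q| * |m τ| := by rw [abs_mul, abs_mul]
    _ ≤ R * (M * τ) + R * (M * τ) := by gcongr
    _ = _ := by ring

theorem abs_gap_le (h : SinhLike m T M) (hσ : 0 < σ) (hτ : 0 < τ) (hT : σ + τ ≤ T)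
    (hX : |X| ≤ R) (hQ : |Q| ≤ R) :
    |gap m P X Q σ τ| ≤ M * T * |P - X| + 2 * R * M * τ := by
  have hM := h.one_le
  have c := gap_close (P := P) h hσ hτ hT hX hQ
  have a1 := h.low (σ + τ) (by linarith) hT
  have b1 : m (σ + τ) ≤ M * T := (h.up (by linarith) hT).trans (by gcongr)
  have : |(P - X) * m (σ + τ)| ≤ M * T * |P - X| := by
    rw [abs_mul, abs_of_nonneg (a := m (σ + τ)) (by linarith), mul_comm]
    gcongr
  have := abs_add_le (gap m P X Q σ τ - (P - X) * m (σ + τ)) ((P - X) * m (σ + τ))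
  rw [sub_add_cancel] at this
  linarith

/-- Leaving from `X` to `P` in a time `τ` short compared with `|P - X|` costs at least a constant
times `(P - X) ^ 2 / τ`. -/
theorem action_lower (h : SinhLike m T M) (hσ : 0 < σ) (hτ : 0 < τ) (hT : σ + τ ≤ T)
    (hl0 : 0 < ℓ) (hl : ℓ ≤ σ + τ) (hX : |X| ≤ R) (hQ : |Q| ≤ R)
    (hs : 4 * R * M * τ ≤ ℓ * |P - X|) :
    ℓ ^ 2 * (P - X) ^ 2 ≤ 8 * M ^ 3 * T ^ 2 * τ * action m P X Q σ τ := by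
  have c := gap_close (P := P) h hσ hτ hT hX hQ
  have a1 := h.low (σ + τ) (by linarith) hT
  have k1 : ℓ * |P - X| ≤ |(P - X) * m (σ + τ)| := by
    rw [abs_mul, abs_of_nonneg (a := m (σ + τ)) (by linarith), mul_comm]
    gcongr
    linarith
  have k2 : ℓ * |P - X| / 2 ≤ |gap m P X Q σ τ| := by
    have := abs_sub_abs_le_abs_sub ((P - X) * m (σ + τ)) (gap m P X Q σ τ)
    rw [abs_sub_comm] at this
    linarith
  have k3 : (ℓ * |P - X| / 2) ^ 2 ≤ gap m P X Q σ τ ^ 2 := by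
    rw [← sq_abs (gap m P X Q σ τ)]
    gcongr
  have k4 : gap m P X Q σ τ ^ 2 = den m σ τ * action m P X Q σ τ := by
    unfold action
    rw [mul_div_cancel₀ _ (den_pos h hσ hτ hT).ne']
  have k5 : den m σ τ * action m P X Q σ τ ≤ 2 * M ^ 3 * T ^ 2 * τ * action m P X Q σ τ :=
    mul_le_mul_of_nonneg_right (den_le h hσ hτ hT) (action_nonneg h hσ hτ hT)
  have k6 : (ℓ * |P - X| / 2) ^ 2 = ℓ ^ 2 * (P - X) ^ 2 / 4 := by
    rw [div_pow, mul_pow, sq_abs]; norm_num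
  linarith

/-- A time `τ` equal to `ℓ / (2 * w)` times `|P - X|` gives a cost linear in `|P - X|`; the
restriction `|P - X| < w` makes this time shorter than half of `ℓ`. -/
theorem action_upper (h : SinhLike m T M) {w : ℝ} (hl0 : 0 < ℓ) (hl : ℓ ≤ σ + τ) (hT : σ + τ ≤ T)
    (hX : |X| ≤ R) (hQ : |Q| ≤ R) (hPX : 0 < |P - X|) (hw : |P - X| < w)
    (hτ : τ = ℓ * |P - X| / (2 * w)) :
    action m P X Q σ τ ≤ 2 * (M * T + R * M * ℓ / w) ^ 2 * w / ℓ ^ 3 * |P - X| := by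
  have hw0 : 0 < w := hPX.trans hw
  have hM := h.one_le
  have hR : 0 ≤ R := (abs_nonneg _).trans hX
  have hτ0 : 0 < τ := by rw [hτ]; positivity
  have hτ1 : τ < ℓ / 2 := by
    rw [hτ, div_lt_div_iff₀ (by positivity) (by norm_num)]
    nlinarith
  have hσ : ℓ / 2 < σ := by linarith
  have hσ0 : 0 < σ := by linarith
  have g := abs_gap_le (P := P) h hσ0 hτ0 hT hX hQ
  have g1 : M * T * |P - X| + 2 * R * M * τ = (M * T + R * M * ℓ / w) * |P - X| := by
    rw [hτ]; field_simp
  rw [g1] at g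
  have g2 : gap m P X Q σ τ ^ 2 ≤ ((M * T + R * M * ℓ / w) * |P - X|) ^ 2 := by
    rw [← sq_abs (gap m P X Q σ τ)]
    gcongr
  have d1 : 2 * ℓ * (ℓ / 2) * τ ≤ den m σ τ := by
    refine le_trans ?_ (le_den h hσ0 hτ0 hT)
    gcongr
  unfold action
  rw [div_le_iff₀ (den_pos h hσ0 hτ0 hT)]
  have hT0 : 0 < T := by linarith
  calc _ ≤ _ := g2
    _ = 2 * (M * T + R * M * ℓ / w) ^ 2 * w / ℓ ^ 3 * |P - X| * (2 * ℓ * (ℓ / 2) * τ) := by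
      rw [hτ]; field_simp
    _ ≤ _ := by gcongr

/-- Moving the starting data from `(X, σ + τ)` to `(Y, ρ + τ)`, with the exit delay `τ` kept,
raises the cost by at most a constant times the displacement `Δ`, provided that `Δ ≤ τ`, that
`|P - X|` is at most a multiple of `τ`, and that the cost at `(X, σ + τ)` is at most `B`. The second
condition makes `gap` of order `τ`, so that its square changes by at most a multiple of `τ * Δ`,
and the factor `τ` cancels the one in the denominator. -/
theorem action_shift (h : SinhLike m T M) {Y ρ κ K B Δ : ℝ} (hl0 : 0 < ℓ) (hl : ℓ ≤ ρ + τ)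
    (hκ : 0 < κ) (hσ : κ ≤ σ) (hρ : κ ≤ ρ) (hτ : 0 < τ) (hT : σ + τ ≤ T) (hT2 : ρ + τ ≤ T)
    (hP : |P| ≤ R) (hX : |X| ≤ R) (hQ : |Q| ≤ R)
    (hK : |P - X| ≤ K * τ) (hB : action m P X Q σ τ ≤ B)
    (hXY : |X - Y| ≤ Δ) (hσρ : |σ - ρ| ≤ Δ) (hΔ : Δ ≤ τ) :
    action m P Y Q ρ τ ≤ action m P X Q σ τ +
      (4 * M ^ 3 * T * B + 2 * (M * T * K + 2 * R * M) * (2 * R * M + M * T)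
        + (2 * R * M + M * T) ^ 2) / (2 * ℓ * κ) * Δ := by
  have hM := h.one_le
  have hR : 0 ≤ R := (abs_nonneg _).trans hX
  have hΔ0 : 0 ≤ Δ := (abs_nonneg _).trans hXY
  have hσ0 : 0 < σ := by linarith
  have hρ0 : 0 < ρ := by linarith
  have hT0 : 0 < T := by linarith
  have hB0 : 0 ≤ B := (action_nonneg h hσ0 hτ hT).trans hB
  have hl1 : |m (σ + τ) - m (ρ + τ)| ≤ M * Δ := by
    refine (h.lip _ _ (by linarith) hT (by linarith) hT2).trans ?_
    rw [add_sub_add_right_eq_sub]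
    gcongr
  have hl2 : |m σ - m ρ| ≤ M * Δ :=
    (h.lip _ _ hσ0.le (by linarith) hρ0.le (by linarith)).trans (by gcongr)
  have p1 := h.low ρ hρ0.le (by linarith)
  have p2 := h.low (σ + τ) (by linarith) hT
  have p3 := h.low τ hτ.le (by linarith)
  have q1 : m ρ ≤ M * T := (h.up hρ0.le (by linarith)).trans (by gcongr; linarith)
  have q2 : m (σ + τ) ≤ M * T := (h.up (by linarith) hT).trans (by gcongr)
  have q3 := h.up hτ.le (by linarith)
  have g1 : |gap m P X Q σ τ| ≤ (M * T * K + 2 * R * M) * τ := by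
    refine (abs_gap_le h hσ0 hτ hT hX hQ).trans ?_
    calc _ ≤ M * T * (K * τ) + 2 * R * M * τ := by gcongr
      _ = _ := by ring
  have g2 : |gap m P Y Q ρ τ - gap m P X Q σ τ| ≤ (2 * R * M + M * T) * Δ := by
    have e : gap m P Y Q ρ τ - gap m P X Q σ τ =
        -(P * (m (σ + τ) - m (ρ + τ))) + X * (m σ - m ρ) + (X - Y) * m ρ := by
      unfold gap; ring
    rw [e]
    calc _ ≤ |-(P * (m (σ + τ) - m (ρ + τ)))| + |X * (m σ - m ρ)| + |(X - Y) * m ρ| :=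
          abs_add_three _ _ _
      _ = |P| * |m (σ + τ) - m (ρ + τ)| + |X| * |m σ - m ρ| + |X - Y| * m ρ := by
          rw [abs_neg, abs_mul, abs_mul, abs_mul, abs_of_nonneg (a := m ρ) (by linarith)]
      _ ≤ R * (M * Δ) + R * (M * Δ) + Δ * (M * T) := by gcongr; linarith
      _ = _ := by ring
  have d1 : den m σ τ - den m ρ τ ≤ 4 * M ^ 3 * T * τ * Δ := by
    have e : den m σ τ - den m ρ τ =
        2 * m τ * (m (σ + τ) * (m σ - m ρ) + (m (σ + τ) - m (ρ + τ)) * m ρ) := by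
      unfold den; ring
    rw [e]
    have := le_of_abs_le hl1
    have := le_of_abs_le hl2
    calc _ ≤ 2 * m τ * ((M * T) * (M * Δ) + (M * Δ) * (M * T)) := by
          have : 0 ≤ m τ := by linarith
          have : 0 ≤ m (σ + τ) := by linarith
          have : 0 ≤ m ρ := by linarith
          have : m (σ + τ) * (m σ - m ρ) ≤ m (σ + τ) * (M * Δ) := by gcongr
          have : m (σ + τ) * (M * Δ) ≤ (M * T) * (M * Δ) := by gcongr
          have : (m (σ + τ) - m (ρ + τ)) * m ρ ≤ (M * Δ) * m ρ := by gcongr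
          have : (M * Δ) * m ρ ≤ (M * Δ) * (M * T) := by gcongr
          refine mul_le_mul_of_nonneg_left ?_ (by linarith)
          linarith
      _ ≤ 2 * (M * τ) * ((M * T) * (M * Δ) + (M * Δ) * (M * T)) := by gcongr
      _ = _ := by ring
  have d2 : 2 * ℓ * κ * τ ≤ den m ρ τ := by
    refine le_trans ?_ (le_den h hρ0 hτ hT2)
    gcongr
  have hK0 : 0 ≤ K * τ := (abs_nonneg _).trans hK
  have hK1 : 0 ≤ K := nonneg_of_mul_nonneg_left hK0 hτ
  set F := action m P X Q σ τ with hF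
  have hF0 : 0 ≤ F := action_nonneg h hσ0 hτ hT
  have k4 : gap m P X Q σ τ ^ 2 = F * den m σ τ := by
    rw [hF]; unfold action
    rw [div_mul_cancel₀ _ (den_pos h hσ0 hτ hT).ne']
  set u := M * T * K + 2 * R * M
  set v := 2 * R * M + M * T
  have hu : 0 ≤ u := by positivity
  have hv : 0 ≤ v := by positivity
  have s1 : gap m P Y Q ρ τ ^ 2 ≤ gap m P X Q σ τ ^ 2 + (2 * u * v + v ^ 2) * (τ * Δ) := by
    set A := gap m P X Q σ τ
    set B' := gap m P Y Q ρ τ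
    have e : B' ^ 2 = A ^ 2 + 2 * (A * (B' - A)) + (B' - A) ^ 2 := by ring
    have t1 : A * (B' - A) ≤ u * τ * (v * Δ) := by
      refine (le_abs_self _).trans ?_
      rw [abs_mul]
      gcongr
    have t2 : (B' - A) ^ 2 ≤ v ^ 2 * (τ * Δ) := by
      rw [← sq_abs]
      calc |B' - A| ^ 2 ≤ (v * Δ) ^ 2 := by gcongr
        _ = v ^ 2 * (Δ * Δ) := by ring
        _ ≤ v ^ 2 * (τ * Δ) := by gcongr
    linarith
  have s2 : F * (den m σ τ - den m ρ τ) ≤ B * (4 * M ^ 3 * T * τ * Δ) := by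
    calc _ ≤ F * (4 * M ^ 3 * T * τ * Δ) := by gcongr
      _ ≤ _ := by gcongr
  have e1 : action m P Y Q ρ τ = gap m P Y Q ρ τ ^ 2 / den m ρ τ := rfl
  rw [e1, div_le_iff₀ (den_pos h hρ0 hτ hT2)]
  have s3 : (4 * M ^ 3 * T * B + 2 * u * v + v ^ 2) / (2 * ℓ * κ) * Δ * (2 * ℓ * κ * τ) ≤
      (4 * M ^ 3 * T * B + 2 * u * v + v ^ 2) / (2 * ℓ * κ) * Δ * den m ρ τ := by gcongr
  have s4 : (4 * M ^ 3 * T * B + 2 * u * v + v ^ 2) / (2 * ℓ * κ) * Δ * (2 * ℓ * κ * τ) =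
      (4 * M ^ 3 * T * B + 2 * u * v + v ^ 2) * (τ * Δ) := by
    field_simp
  linarith

end Estimates

/-! ### Estimates for the infimum -/

theorem uval_le_cost {a0 a1 T xT d1 d2 x s d t : ℝ} (ha : a1 ≠ 0) (hd : d = d1 ∨ d = d2)
    (hs : s < t) (ht : t < T) (hs0 : 0 ≤ s) :
    uval a0 a1 T xT d1 d2 x s ≤ cost a0 a1 T xT x s d t := by
  refine csInf_le ⟨0, ?_⟩ ⟨d, hd, t, ⟨hs, ht⟩, rfl⟩
  rintro r ⟨e, -, v, hv, rfl⟩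
  rw [cost_eq_action ha hv.1 hv.2]
  exact action_nonneg (sinhLike_sinh (T := T) ha) (sub_pos.2 hv.2) (sub_pos.2 hv.1) (by linarith)

/-- The exit cost vanishes at least linearly at each boundary point. -/
theorem uval_le_dist {a0 a1 T xT d1 d2 T' R : ℝ} (ha : a1 ≠ 0) (h0 : 0 ≤ T') (hT' : T' < T)
    (h12 : d1 < d2) (hR : ∀ x ∈ Set.Icc d1 d2, |x + a0 / a1| ≤ R) (hxT : |xT + a0 / a1| ≤ R) :
    ∃ K, 0 < K ∧ ∀ x ∈ Set.Ioo d1 d2, ∀ s ∈ Set.Icc 0 T', ∀ d, (d = d1 ∨ d = d2) →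
      uval a0 a1 T xT d1 d2 x s ≤ K * |d - x| := by
  have hm := sinhLike_sinh (T := T) ha
  set M := Real.cosh (a1 * T)
  have hM := hm.one_le
  have hR0 : 0 ≤ R := (abs_nonneg _).trans hxT
  have hl : 0 < T - T' := sub_pos.2 hT'
  have hw : 0 < d2 - d1 := sub_pos.2 h12
  have hT : 0 < T := by linarith
  refine ⟨2 * (M * T + R * M * (T - T') / (d2 - d1)) ^ 2 * (d2 - d1) / (T - T') ^ 3,
    by positivity, fun x hx s hs d hd => ?_⟩
  have hdx : 0 < |d - x| ∧ |d - x| < d2 - d1 := by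
    rcases hd with rfl | rfl
    · rw [abs_of_neg (by linarith [hx.1])]; constructor <;> linarith [hx.1, hx.2]
    · rw [abs_of_pos (by linarith [hx.2])]; constructor <;> linarith [hx.1, hx.2]
  have e : d + a0 / a1 - (x + a0 / a1) = d - x := by ring
  set τ := (T - T') * |d - x| / (2 * (d2 - d1)) with hτ
  have hτ0 : 0 < τ := by have := hdx.1; positivity
  have hτ1 : τ < T - T' := by
    rw [hτ, div_lt_iff₀ (by positivity)]
    nlinarith [hdx.2]
  refine (uval_le_cost ha hd (t := s + τ) (by linarith) (by linarith [hs.2]) hs.1).trans ?_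
  rw [cost_eq_action ha (by linarith) (by linarith [hs.2]), ← e]
  have e2 : s + τ - s = τ := by ring
  refine action_upper hm hl (by linarith [hs.2]) (by linarith [hs.1])
    (hR x ⟨hx.1.le, hx.2.le⟩) hxT ?_ ?_ ?_
  · rw [e]; exact hdx.1
  · rw [e]; exact hdx.2
  · rw [e, e2]

/-- One-sided form of the Lipschitz estimate. -/
theorem uval_le_add {a0 a1 T xT d1 d2 T' : ℝ} (ha : a1 ≠ 0) (h0 : 0 ≤ T') (hT' : T' < T)
    (h1 : d1 < xT) (h2 : xT < d2) :
    ∃ L : ℝ, ∀ x1 ∈ Set.Ioo d1 d2, ∀ s1 ∈ Set.Icc 0 T',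
      ∀ x2 ∈ Set.Ioo d1 d2, ∀ s2 ∈ Set.Icc 0 T',
        uval a0 a1 T xT d1 d2 x2 s2 ≤ uval a0 a1 T xT d1 d2 x1 s1 +
          L * (|x1 - x2| + |s1 - s2|) := by
  have hm := sinhLike_sinh (T := T) ha
  set M := Real.cosh (a1 * T)
  have hM := hm.one_le
  have hT : 0 < T := by linarith
  set ℓ := T - T' with hℓ
  have hl : 0 < ℓ := sub_pos.2 hT'
  set c := a0 / a1 with hc
  obtain ⟨R, hR0, hR⟩ : ∃ R : ℝ, 0 < R ∧ ∀ x ∈ Set.Icc d1 d2, |x + c| ≤ R := by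
    refine ⟨|d1| + |d2| + |c| + 1, by positivity, fun x hx => ?_⟩
    have := abs_le_max_abs_abs hx.1 hx.2
    have : max |d1| |d2| ≤ |d1| + |d2| :=
      max_le (by linarith [abs_nonneg d2]) (by linarith [abs_nonneg d1])
    linarith [abs_add_le x c]
  have hQ : |xT + c| ≤ R := hR xT ⟨h1.le, h2.le⟩
  obtain ⟨K, hK, hu⟩ := uval_le_dist (R := R) ha h0 hT' (h1.trans h2) hR hQ
  set B := K * (d2 - d1) with hB
  have hB0 : 0 < B := mul_pos hK (by linarith)
  -- Exit delays `τ ≤ κ * |d - x|` are too expensive to compete with the linear bound.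
  set κ := min (ℓ / (4 * R * M)) (ℓ ^ 2 / (8 * M ^ 3 * T ^ 2 * K)) with hκ
  have hκ0 : 0 < κ := lt_min (by positivity) (by positivity)
  obtain ⟨η, hη0, hη⟩ : ∃ η : ℝ, 0 < η ∧ ∀ d, (d = d1 ∨ d = d2) → η ≤ |d - xT| := by
    refine ⟨min (xT - d1) (d2 - xT), lt_min (by linarith) (by linarith), ?_⟩
    rintro d (rfl | rfl)
    · rw [abs_of_neg (by linarith)]; exact (min_le_left _ _).trans (by linarith)
    · rw [abs_of_pos (by linarith)]; exact min_le_right _ _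
  -- Exit times with `T - t ≤ ε` cost at least the uniform bound `B`.
  set ε := min (ℓ * η / (4 * R * M)) (ℓ ^ 2 * η ^ 2 / (8 * M ^ 3 * T ^ 2 * B)) with hε
  have hε0 : 0 < ε := lt_min (by positivity) (by positivity)
  set L1 := (4 * M ^ 3 * T * B + 2 * (M * T * κ⁻¹ + 2 * R * M) * (2 * R * M + M * T)
        + (2 * R * M + M * T) ^ 2) / (2 * ℓ * (ε / 2)) with hL1
  have hL10 : 0 ≤ L1 := by positivity
  refine ⟨L1 + K * (κ⁻¹ + 1) + 2 * B / ε, fun x1 hx1 s1 hs1 x2 hx2 s2 hs2 => ?_⟩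
  set Δ := |x1 - x2| + |s1 - s2| with hΔ
  have hΔ0 : 0 ≤ Δ := by positivity
  have hLΔ : (L1 + K * (κ⁻¹ + 1) + 2 * B / ε) * Δ =
      L1 * Δ + K * κ⁻¹ * Δ + K * Δ + 2 * B / ε * Δ := by ring
  have hn1 : 0 ≤ L1 * Δ := by positivity
  have hn2 : 0 ≤ K * κ⁻¹ * Δ := by positivity
  have hn3 : 0 ≤ K * Δ := by positivity
  have hn4 : 0 ≤ 2 * B / ε * Δ := by positivity
  rw [hLΔ, ← sub_le_iff_le_add]
  refine le_csInf ?_ ?_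
  · exact ⟨_, d1, Or.inl rfl, (s1 + T) / 2,
      ⟨by linarith [hs1.2], by linarith [hs1.2]⟩, rfl⟩
  rintro r ⟨d, hd, t, ht, rfl⟩
  rw [sub_le_iff_le_add]
  have hdI : d ∈ Set.Icc d1 d2 := by
    rcases hd with rfl | rfl <;> constructor <;> linarith
  have hdx : ∀ x ∈ Set.Ioo d1 d2, |d - x| ≤ d2 - d1 := fun x hx => by
    rw [abs_le]; constructor <;> linarith [hx.1, hx.2, hdI.1, hdI.2]
  have hu2 : uval a0 a1 T xT d1 d2 x2 s2 ≤ K * |d - x2| := hu x2 hx2 s2 hs2 d hd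
  have hub : uval a0 a1 T xT d1 d2 x2 s2 ≤ B :=
    hu2.trans (mul_le_mul_of_nonneg_left (hdx x2 hx2) hK.le)
  have hu3 : uval a0 a1 T xT d1 d2 x2 s2 ≤ K * |d - x1| + K * Δ := by
    refine hu2.trans ?_
    rw [← mul_add]
    refine mul_le_mul_of_nonneg_left ?_ hK.le
    have := abs_sub_le d x1 x2
    have := abs_nonneg (s1 - s2)
    linarith
  have hτ0 : 0 < t - s1 := sub_pos.2 ht.1
  have hσ0 : 0 < T - t := sub_pos.2 ht.2
  have hsum : T - t + (t - s1) = T - s1 := by ring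
  have hle : T - t + (t - s1) ≤ T := by linarith [hs1.1]
  have hge : ℓ ≤ T - t + (t - s1) := by linarith [hs1.2]
  have hX1 := hR x1 ⟨hx1.1.le, hx1.2.le⟩
  have hP := hR d hdI
  have e1 : d + c - (x1 + c) = d - x1 := by ring
  have eT : d + c - (xT + c) = d - xT := by ring
  rw [cost_eq_action ha ht.1 ht.2]
  set m : ℝ → ℝ := fun y => Real.sinh (a1 * y) / a1 with hmdef
  set F := action m (d + c) (x1 + c) (xT + c) (T - t) (t - s1) with hF
  have hF0 : 0 ≤ F := action_nonneg hm hσ0 hτ0 hle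
  by_cases hτκ : t - s1 ≤ κ * |d - x1|
  · have hpos : 0 < |d - x1| := by
      by_contra hh
      have : |d - x1| = 0 := le_antisymm (not_lt.1 hh) (abs_nonneg _)
      rw [this, mul_zero] at hτκ
      linarith
    have k1 : κ * (4 * R * M) ≤ ℓ := (le_div_iff₀ (by positivity)).1 (min_le_left _ _)
    have k2 : κ * (8 * M ^ 3 * T ^ 2 * K) ≤ ℓ ^ 2 :=
      (le_div_iff₀ (by positivity)).1 (min_le_right _ _)
    have low := action_lower (P := d + c) hm hσ0 hτ0 hle hl hge hX1 hQ (by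
      rw [e1]
      calc 4 * R * M * (t - s1) ≤ 4 * R * M * (κ * |d - x1|) := by gcongr
        _ = κ * (4 * R * M) * |d - x1| := by ring
        _ ≤ _ := by gcongr)
    rw [e1, ← hF] at low
    have : K * |d - x1| ≤ F := by
      have p : 0 < κ * (8 * M ^ 3 * T ^ 2) * |d - x1| := by positivity
      refine le_of_mul_le_mul_left ?_ p
      calc κ * (8 * M ^ 3 * T ^ 2) * |d - x1| * (K * |d - x1|)
          = κ * (8 * M ^ 3 * T ^ 2 * K) * |d - x1| ^ 2 := by ring
        _ ≤ ℓ ^ 2 * |d - x1| ^ 2 := by gcongr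
        _ = ℓ ^ 2 * (d - x1) ^ 2 := by rw [sq_abs]
        _ ≤ 8 * M ^ 3 * T ^ 2 * (t - s1) * F := low
        _ ≤ 8 * M ^ 3 * T ^ 2 * (κ * |d - x1|) * F := by gcongr
        _ = _ := by ring
    linarith
  have hδ : |d - x1| ≤ κ⁻¹ * (t - s1) := by
    rw [inv_mul_eq_div, le_div_iff₀ hκ0, mul_comm]
    exact (not_le.1 hτκ).le
  by_cases hσε : T - t ≤ ε
  · have k1 : ε * (4 * R * M) ≤ ℓ * η := (le_div_iff₀ (by positivity)).1 (min_le_left _ _)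
    have k2 : ε * (8 * M ^ 3 * T ^ 2 * B) ≤ ℓ ^ 2 * η ^ 2 :=
      (le_div_iff₀ (by positivity)).1 (min_le_right _ _)
    have hηd := hη d hd
    -- Time reversal turns the terminal point into the starting point of `action_lower`.
    have low := action_lower (P := d + c) hm hτ0 hσ0 (by linarith) hl (by linarith) hQ hX1 (by
      rw [eT]
      calc 4 * R * M * (T - t) ≤ 4 * R * M * ε := by gcongr
        _ = ε * (4 * R * M) := by ring
        _ ≤ ℓ * η := k1
        _ ≤ _ := by gcongr)
    rw [eT, ← action_symm, ← hF] at low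
    have : B ≤ F := by
      have p : 0 < ε * (8 * M ^ 3 * T ^ 2) := by positivity
      refine le_of_mul_le_mul_left ?_ p
      calc ε * (8 * M ^ 3 * T ^ 2) * B = ε * (8 * M ^ 3 * T ^ 2 * B) := by ring
        _ ≤ ℓ ^ 2 * η ^ 2 := k2
        _ ≤ ℓ ^ 2 * |d - xT| ^ 2 := by gcongr
        _ = ℓ ^ 2 * (d - xT) ^ 2 := by rw [sq_abs]
        _ ≤ 8 * M ^ 3 * T ^ 2 * (T - t) * F := low
        _ ≤ 8 * M ^ 3 * T ^ 2 * ε * F := by gcongr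
        _ = _ := by ring
    linarith
  by_cases hFB : B ≤ F
  · linarith
  by_cases hΔε : ε / 2 ≤ Δ
  · have : B ≤ 2 * B / ε * Δ := by
      calc B = 2 * B / ε * (ε / 2) := by field_simp
        _ ≤ _ := by gcongr
    linarith
  by_cases hΔτ : t - s1 ≤ Δ
  · have : K * |d - x1| ≤ K * κ⁻¹ * Δ := by
      rw [mul_assoc]
      refine mul_le_mul_of_nonneg_left (hδ.trans ?_) hK.le
      gcongr
    linarith
  push Not at hσε hFB hΔε hΔτ
  have hxΔ : |x1 - x2| ≤ Δ := by linarith [abs_nonneg (s1 - s2)]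
  have hsΔ : |s1 - s2| ≤ Δ := by linarith [abs_nonneg (x1 - x2)]
  have hsl := neg_le_of_abs_le hsΔ
  -- The competitor for `(x2, s2)` has the same exit delay as `t` has for `(x1, s1)`.
  have ht2 : s2 + (t - s1) < T := by linarith
  have sh := action_shift (P := d + c) (X := x1 + c) (Y := x2 + c) (Q := xT + c)
    (σ := T - t) (τ := t - s1) (ρ := T - (s2 + (t - s1))) (κ := ε / 2) (K := κ⁻¹) (B := B)
    (Δ := Δ) (ℓ := ℓ) (R := R) hm hl (by linarith [hs2.2]) (by positivity) (by linarith)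
    (by linarith) hτ0 hle (by linarith [hs2.1]) hP hX1 hQ (by rw [e1]; exact hδ) hFB.le
    (by rw [add_sub_add_right_eq_sub]; exact hxΔ)
    (by rw [show T - t - (T - (s2 + (t - s1))) = s2 - s1 by ring, abs_sub_comm]; exact hsΔ)
    hΔτ.le
  have fin := uval_le_cost (a0 := a0) (xT := xT) (x := x2) ha hd (t := s2 + (t - s1))
    (by linarith) ht2 hs2.1
  rw [cost_eq_action ha (by linarith) ht2, show s2 + (t - s1) - s2 = t - s1 by ring] at fin
  have := fin.trans sh
  linarith

theorem stmt_12 (a0 a1 T xT d1 d2 : ℝ) (ha1 : a1 ≠ 0) (hT : 0 < T)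
    (h1 : d1 < xT) (h2 : xT < d2)
    (hint : ∀ x ∈ Set.Ioo d1 d2, ∀ s, 0 ≤ s → s < T →
      ∀ t ∈ Set.Icc s T, traj a0 a1 T xT x s t ∈ Set.Ioo d1 d2) :
    ∀ T', 0 ≤ T' → T' < T →
      ∃ L : ℝ, ∀ x1 ∈ Set.Ioo d1 d2, ∀ s1 ∈ Set.Icc 0 T',
        ∀ x2 ∈ Set.Ioo d1 d2, ∀ s2 ∈ Set.Icc 0 T',
          |uval a0 a1 T xT d1 d2 x1 s1 - uval a0 a1 T xT d1 d2 x2 s2| ≤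
            L * (|x1 - x2| + |s1 - s2|) := by
  intro T' h0 hT'
  obtain ⟨L, hL⟩ := uval_le_add (a0 := a0) ha1 h0 hT' h1 h2
  refine ⟨L, fun x1 hx1 s1 hs1 x2 hx2 s2 hs2 => ?_⟩
  have A := hL x1 hx1 s1 hs1 x2 hx2 s2 hs2
  have B := hL x2 hx2 s2 hs2 x1 hx1 s1 hs1
  rw [abs_sub_comm x2, abs_sub_comm s2] at B
  rw [abs_le]
  constructor <;> linarith
end

section
/- Assume d1 < x_T < d2 and let (x,s) ∈ (d1,d2)×[0,T) be strongly regular. Then there exists an open neighborhood U of (x,s) in (d1,d2)×[0,T) such that every point of U is strongly regular, the optimal exit position is constant on U (d_{y,v} = d_{x,s} for all (y,v) ∈ U), the map (y,v) ↦ ν_{y,v} is C^∞ on U, the map (y,v) ↦ u(y,v) is C^∞ on U, and for all (y,v) ∈ U: ∂u(y,v)/∂y = −a1·(d_{y,v} − x⁰_{y,v}(ν_{y,v}))/sinh(a1(ν_{y,v}−v)) and ∂²u(y,v)/∂y² = a1³·(d_{y,v} + a0/a1)·[1 − cosh(2a1(T−ν_{y,v}))] / (sinh(a1(T−v))·(∂g(y,v;d_{y,v},t)/∂t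 evaluated at t = ν_{y,v})). -/
/-- The auxiliary function `g(x,s;d,t)`. -/
noncomputable def gfun (a0 a1 T xT x s d t : ℝ) : ℝ :=
  a1 * ((d + a0 / a1) * Real.sinh (a1 * (2 * t - T - s)) +
    (x + a0 / a1) * Real.sinh (a1 * (T - t)) -
    (xT + a0 / a1) * Real.sinh (a1 * (t - s)))

/-- `(x,s)` is strongly regular with optimal exit pair `(dm, νm)`: the exit cost
`u(x,s)` is positive, the minimum of `(d,t) ↦ u(x,s;d,t)` over `{d1,d2} × (s,T)` is
attained at the unique point `(dm, νm)`, and `∂²u(x,s;dm,t)/∂t²` is positive at `t = νm`. -/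
def StronglyRegularAt (a0 a1 T xT d1 d2 x s dm νm : ℝ) : Prop :=
  0 < uval a0 a1 T xT d1 d2 x s ∧
  (dm = d1 ∨ dm = d2) ∧ νm ∈ Set.Ioo s T ∧
  (∀ d, (d = d1 ∨ d = d2) → ∀ t ∈ Set.Ioo s T,
    cost a0 a1 T xT x s dm νm ≤ cost a0 a1 T xT x s d t) ∧
  (∀ d, (d = d1 ∨ d = d2) → ∀ t ∈ Set.Ioo s T, (d, t) ≠ (dm, νm) →
    cost a0 a1 T xT x s dm νm < cost a0 a1 T xT x s d t) ∧
  0 < deriv (deriv (fun t => cost a0 a1 T xT x s dm t)) νm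

open Set Filter Topology

/-! ### The cost and its time derivatives -/

/-- The numerator `N` of the cost: `d - x⁰_{y,v}(t) = N / sinh (a1 (T - v))`. -/
noncomputable def num (a0 a1 T xT y v d t : ℝ) : ℝ :=
  (d + a0 / a1) * Real.sinh (a1 * (T - v)) - (y + a0 / a1) * Real.sinh (a1 * (T - t)) -
    (xT + a0 / a1) * Real.sinh (a1 * (t - v))

/-- The time derivative `∂g/∂t` in closed form. -/
noncomputable def gder (a0 a1 T xT y v d t : ℝ) : ℝ :=
  a1 ^ 2 * (2 * (d + a0 / a1) * Real.cosh (a1 * (2 * t - T - v)) -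
    (y + a0 / a1) * Real.cosh (a1 * (T - t)) - (xT + a0 / a1) * Real.cosh (a1 * (t - v)))

lemma mul_sinh_pos {a1 r : ℝ} (ha1 : a1 ≠ 0) (hr : 0 < r) : 0 < a1 * Real.sinh (a1 * r) := by
  rcases ha1.lt_or_gt with h | h
  · exact mul_pos_of_neg_of_neg h (Real.sinh_neg_iff.2 (mul_neg_of_neg_of_pos h hr))
  · exact mul_pos h (Real.sinh_pos_iff.2 (mul_pos h hr))

lemma sinh_ne {a1 r : ℝ} (ha1 : a1 ≠ 0) (hr : 0 < r) : Real.sinh (a1 * r) ≠ 0 :=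
  right_ne_zero_of_mul (mul_sinh_pos ha1 hr).ne'

/-- The denominator of the cost has the sign of `a1`. -/
lemma denom_pos {a1 T v t : ℝ} (ha1 : a1 ≠ 0) (ht : t ∈ Ioo v T) :
    0 < a1 * (Real.sinh (a1 * (T - v)) * Real.sinh (a1 * (T - t)) * Real.sinh (a1 * (t - v))) := by
  have h1 := mul_sinh_pos ha1 (sub_pos.2 (ht.1.trans ht.2))
  have h2 := mul_sinh_pos ha1 (sub_pos.2 ht.2)
  have h3 := mul_sinh_pos ha1 (sub_pos.2 ht.1)
  have h4 : 0 < a1 ^ 2 := by positivity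
  refine (mul_pos_iff_of_pos_left h4).1 ?_
  have := mul_pos (mul_pos h1 h2) h3
  linarith

section
variable {a0 a1 T xT y v d t : ℝ}

lemma sub_traj (ha1 : a1 ≠ 0) (hv : v < T) :
    d - traj a0 a1 T xT y v t = num a0 a1 T xT y v d t / Real.sinh (a1 * (T - v)) := by
  have := sinh_ne ha1 (sub_pos.2 hv)
  unfold traj num
  field_simp
  ring

lemma cost_eq (ha1 : a1 ≠ 0) (hv : v < T) :
    cost a0 a1 T xT y v d t = a1 * num a0 a1 T xT y v d t ^ 2 /
      (2 * (Real.sinh (a1 * (T - v)) * Real.sinh (a1 * (T - t)) * Real.sinh (a1 * (t - v)))) := by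
  have := sinh_ne ha1 (sub_pos.2 hv)
  unfold cost
  rw [sub_traj ha1 hv]
  rw [div_pow, show a1 * Real.sinh (a1 * (T - v)) *
    (num a0 a1 T xT y v d t ^ 2 / Real.sinh (a1 * (T - v)) ^ 2) =
    a1 * num a0 a1 T xT y v d t ^ 2 / Real.sinh (a1 * (T - v)) by field_simp, div_div]
  congr 1
  ring

/-- Comparison of the cost with a level `c`, with the denominators cleared. The right-hand side
still makes sense, and is continuous, at the endpoints `t = v` and `t = T`. -/
lemma lt_cost_iff (ha1 : a1 ≠ 0) (ht : t ∈ Ioo v T) (c : ℝ) :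
    c < cost a0 a1 T xT y v d t ↔ 0 < a1 ^ 2 * num a0 a1 T xT y v d t ^ 2 -
      2 * c * (a1 * (Real.sinh (a1 * (T - v)) * Real.sinh (a1 * (T - t)) *
        Real.sinh (a1 * (t - v)))) := by
  have h := denom_pos ha1 ht
  rw [cost_eq ha1 (ht.1.trans ht.2)]
  generalize Real.sinh (a1 * (T - v)) * Real.sinh (a1 * (T - t)) * Real.sinh (a1 * (t - v)) = Q at *
  rw [← mul_div_mul_left _ _ ha1, lt_div_iff₀ (by linarith), sub_pos]
  constructor <;> intro h <;> linarith

lemma hasDerivAt_gfun :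
    HasDerivAt (fun t => gfun a0 a1 T xT y v d t) (gder a0 a1 T xT y v d t) t := by
  have e1 : HasDerivAt (fun t : ℝ => a1 * (2 * t - T - v)) (a1 * 2) t := by
    simpa using ((((hasDerivAt_id t).const_mul 2).sub_const T).sub_const v).const_mul a1
  have e2 : HasDerivAt (fun t : ℝ => a1 * (T - t)) (a1 * -1) t := by
    simpa using ((hasDerivAt_id t).const_sub T).const_mul a1
  have e3 : HasDerivAt (fun t : ℝ => a1 * (t - v)) (a1 * 1) t := by
    simpa using ((hasDerivAt_id t).sub_const v).const_mul a1
  unfold gfun gder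
  convert! (((e1.sinh.const_mul (d + a0 / a1)).add (e2.sinh.const_mul (y + a0 / a1))).sub
    (e3.sinh.const_mul (xT + a0 / a1))).const_mul a1 using 1
  ring

/-- The stationarity equation: `∂u/∂t = a1 N g / (2 P²)` with
`P = sinh (a1 (T - t)) sinh (a1 (t - v))`, so where `N ≠ 0` critical times are zeros of `g`. -/
lemma hasDerivAt_cost (ha1 : a1 ≠ 0) (ht : t ∈ Ioo v T) :
    HasDerivAt (fun t => cost a0 a1 T xT y v d t)
      (a1 * num a0 a1 T xT y v d t * gfun a0 a1 T xT y v d t /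
        (2 * (Real.sinh (a1 * (T - t)) * Real.sinh (a1 * (t - v))) ^ 2)) t := by
  have h1 := sinh_ne ha1 (sub_pos.2 (ht.1.trans ht.2))
  have h2 := sinh_ne ha1 (sub_pos.2 ht.2)
  have h3 := sinh_ne ha1 (sub_pos.2 ht.1)
  have e2 : HasDerivAt (fun t : ℝ => a1 * (T - t)) (a1 * -1) t := by
    simpa using ((hasDerivAt_id t).const_sub T).const_mul a1
  have e3 : HasDerivAt (fun t : ℝ => a1 * (t - v)) (a1 * 1) t := by
    simpa using ((hasDerivAt_id t).sub_const v).const_mul a1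
  have eN : HasDerivAt (fun t => num a0 a1 T xT y v d t) _ t :=
    ((e2.sinh.const_mul (y + a0 / a1)).const_sub ((d + a0 / a1) * Real.sinh (a1 * (T - v)))).sub
      (e3.sinh.const_mul (xT + a0 / a1))
  have eQ := ((e2.sinh.const_mul (Real.sinh (a1 * (T - v)))).mul e3.sinh).const_mul 2
  have key := ((eN.pow 2).const_mul a1).div eQ (by simp [h1, h2, h3])
  have : (fun t => cost a0 a1 T xT y v d t) = fun t => a1 * num a0 a1 T xT y v d t ^ 2 /
      (2 * (Real.sinh (a1 * (T - v)) * Real.sinh (a1 * (T - t)) * Real.sinh (a1 * (t - v)))) := by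
    ext t; exact cost_eq ha1 (ht.1.trans ht.2)
  rw [this]
  convert! key using 1
  simp only [Pi.mul_apply, Pi.pow_apply]
  unfold gfun num
  rw [show a1 * (2 * t - T - v) = a1 * (t - v) - a1 * (T - t) by ring, Real.sinh_sub]
  rw [show a1 * (T - v) = a1 * (t - v) + a1 * (T - t) by ring, Real.sinh_add] at h1 ⊢
  generalize Real.sinh (a1 * (t - v)) = A at *
  generalize Real.sinh (a1 * (T - t)) = B at *
  generalize Real.cosh (a1 * (t - v)) = A' at *
  generalize Real.cosh (a1 * (T - t)) = B' at *
  generalize a0 / a1 = b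
  rw [div_eq_div_iff (by positivity) (by positivity)]
  push_cast
  ring

/-- At a zero of `g` the second time derivative of the cost is `a1 N g_t / (2 P²)`. -/
lemma deriv_deriv_cost (ha1 : a1 ≠ 0) (ht : t ∈ Ioo v T) (hg : gfun a0 a1 T xT y v d t = 0) :
    deriv (deriv (fun t => cost a0 a1 T xT y v d t)) t =
      a1 * num a0 a1 T xT y v d t * gder a0 a1 T xT y v d t /
        (2 * (Real.sinh (a1 * (T - t)) * Real.sinh (a1 * (t - v))) ^ 2) := by
  have h2 := sinh_ne ha1 (sub_pos.2 ht.2)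
  have h3 := sinh_ne ha1 (sub_pos.2 ht.1)
  have ev : deriv (fun t => cost a0 a1 T xT y v d t) =ᶠ[𝓝 t] fun t =>
      (a1 * num a0 a1 T xT y v d t /
        (2 * (Real.sinh (a1 * (T - t)) * Real.sinh (a1 * (t - v))) ^ 2)) *
        gfun a0 a1 T xT y v d t := by
    filter_upwards [Ioo_mem_nhds ht.1 ht.2] with τ hτ
    rw [(hasDerivAt_cost ha1 hτ).deriv]
    ring
  rw [ev.deriv_eq]
  have hd : DifferentiableAt ℝ (fun t => a1 * num a0 a1 T xT y v d t /
        (2 * (Real.sinh (a1 * (T - t)) * Real.sinh (a1 * (t - v))) ^ 2)) t := by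
    unfold num
    refine DifferentiableAt.div (by fun_prop) (by fun_prop) ?_
    positivity
  refine (hd.hasDerivAt.mul hasDerivAt_gfun).deriv.trans ?_
  rw [hg]
  ring

/-- First-order test: if `f'(τ)` has the sign of `τ - ν` on an interval around `ν`, then `ν` is
the strict minimum of `f` there. -/
lemma strict_min_of_deriv_sign {f f' : ℝ → ℝ} {I : Set ℝ} (hI : OrdConnected I)
    (hf : ∀ τ ∈ I, HasDerivAt f (f' τ) τ) {ν : ℝ} (hν : ν ∈ I)
    (hs : ∀ τ ∈ I, τ ≠ ν → 0 < f' τ * (τ - ν)) {t : ℝ} (ht : t ∈ I) (htν : t ≠ ν) :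
    f ν < f t := by
  rcases htν.lt_or_gt with h | h
  · obtain ⟨c, hc, e⟩ := exists_hasDerivAt_eq_slope f f' h
      (fun z hz => (hf z (hI.out ht hν hz)).continuousAt.continuousWithinAt)
      (fun z hz => hf z (hI.out ht hν (Ioo_subset_Icc_self hz)))
    have := hs c (hI.out ht hν (Ioo_subset_Icc_self hc)) hc.2.ne
    have h1 : f' c < 0 := by nlinarith [hc.2]
    rw [e, div_neg_iff] at h1
    rcases h1 with h1 | h1 <;> linarith
  · obtain ⟨c, hc, e⟩ := exists_hasDerivAt_eq_slope f f' h
      (fun z hz => (hf z (hI.out hν ht hz)).continuousAt.continuousWithinAt)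
      (fun z hz => hf z (hI.out hν ht (Ioo_subset_Icc_self hz)))
    have := hs c (hI.out hν ht (Ioo_subset_Icc_self hc)) hc.1.ne'
    have h1 : 0 < f' c := by nlinarith [hc.1]
    rw [e, div_pos_iff] at h1
    rcases h1 with h1 | h1 <;> linarith

/-- A zero `ν` of `g` is the strict minimum of the cost on any time interval `I` on which `a1 N`
and `g_t` keep the sign of a common nonzero number `k`. -/
lemma cost_strict_min (ha1 : a1 ≠ 0) {I : Set ℝ} (hI : OrdConnected I) (hIs : I ⊆ Ioo v T)
    {k ν : ℝ} (hν : ν ∈ I) (hg : gfun a0 a1 T xT y v d ν = 0)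
    (hN : ∀ τ ∈ I, 0 < a1 * num a0 a1 T xT y v d τ * k)
    (hG : ∀ τ ∈ I, 0 < gder a0 a1 T xT y v d τ * k) (ht : t ∈ I) (htν : t ≠ ν) :
    cost a0 a1 T xT y v d ν < cost a0 a1 T xT y v d t := by
  refine strict_min_of_deriv_sign hI (fun τ hτ => hasDerivAt_cost ha1 (hIs hτ)) hν ?_ ht htν
  intro τ hτ hτν
  have h2 := sinh_ne ha1 (sub_pos.2 (hIs hτ).2)
  have h3 := sinh_ne ha1 (sub_pos.2 (hIs hτ).1)
  have hk : k ≠ 0 := right_ne_zero_of_mul (ne_of_gt (hN τ hτ))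
  -- the mean value theorem gives `g(τ) (τ - ν) = g_t(c) (τ - ν)²`
  have hgs : 0 < gfun a0 a1 T xT y v d τ * k * (τ - ν) := by
    rcases hτν.lt_or_gt with h | h
    · obtain ⟨c, hc, e⟩ := exists_hasDerivAt_eq_slope (fun t => gfun a0 a1 T xT y v d t)
        (fun t => gder a0 a1 T xT y v d t) h
        (fun z hz => hasDerivAt_gfun.continuousAt.continuousWithinAt)
        (fun z hz => hasDerivAt_gfun)
      have h1 := hG c (hI.out hτ hν (Ioo_subset_Icc_self hc))
      simp only [hg] at e
      rw [eq_div_iff (by linarith)] at e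
      have h0 : 0 < (τ - ν) ^ 2 := by have := sub_ne_zero.2 hτν; positivity
      have := mul_pos h1 h0
      linear_combination this - k * (τ - ν) * e
    · obtain ⟨c, hc, e⟩ := exists_hasDerivAt_eq_slope (fun t => gfun a0 a1 T xT y v d t)
        (fun t => gder a0 a1 T xT y v d t) h
        (fun z hz => hasDerivAt_gfun.continuousAt.continuousWithinAt)
        (fun z hz => hasDerivAt_gfun)
      have h1 := hG c (hI.out hν hτ (Ioo_subset_Icc_self hc))
      simp only [hg] at e
      rw [eq_div_iff (by linarith)] at e
      have h0 : 0 < (τ - ν) ^ 2 := by have := sub_ne_zero.2 hτν; positivity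
      have := mul_pos h1 h0
      linear_combination this + k * (τ - ν) * e
  have h4 := mul_pos (hN τ hτ) hgs
  have : a1 * num a0 a1 T xT y v d τ * gfun a0 a1 T xT y v d τ /
        (2 * (Real.sinh (a1 * (T - τ)) * Real.sinh (a1 * (τ - v))) ^ 2) * (τ - ν) =
      (a1 * num a0 a1 T xT y v d τ * k * (gfun a0 a1 T xT y v d τ * k * (τ - ν))) /
        (k ^ 2 * (2 * (Real.sinh (a1 * (T - τ)) * Real.sinh (a1 * (τ - v))) ^ 2)) := by
    field_simp
  rw [this]
  positivity

end

/-! ### The branch of zeros of `g` and the value along it -/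

section
variable {a0 a1 T xT v d : ℝ}

/-- Envelope formula: at a zero `ν(y)` of `g` the value `u(y,v;d,ν(y))` only feels the explicit
dependence on `y`, as the contribution of `ν'` carries the factor `g = 0`. -/
lemma hasDerivAt_value {ν : ℝ → ℝ} {y ν' : ℝ} (ha1 : a1 ≠ 0) (hν : HasDerivAt ν ν' y)
    (ht : ν y ∈ Ioo v T) (hg : gfun a0 a1 T xT y v d (ν y) = 0) :
    HasDerivAt (fun y => cost a0 a1 T xT y v d (ν y))
      (-(a1 * (d - traj a0 a1 T xT y v (ν y)) / Real.sinh (a1 * (ν y - v)))) y := by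
  have h1 := sinh_ne ha1 (sub_pos.2 (ht.1.trans ht.2))
  have h2 := sinh_ne ha1 (sub_pos.2 ht.2)
  have h3 := sinh_ne ha1 (sub_pos.2 ht.1)
  have e2 : HasDerivAt (fun z : ℝ => a1 * (T - ν z)) (a1 * -ν') y :=
    (hν.const_sub T).const_mul a1
  have e3 : HasDerivAt (fun z : ℝ => a1 * (ν z - v)) (a1 * ν') y :=
    (hν.sub_const v).const_mul a1
  have eX : HasDerivAt (fun z : ℝ => z + a0 / a1) 1 y := (hasDerivAt_id y).add_const _
  have eN : HasDerivAt (fun z => num a0 a1 T xT z v d (ν z)) _ y :=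
    ((eX.mul e2.sinh).const_sub ((d + a0 / a1) * Real.sinh (a1 * (T - v)))).sub
      (e3.sinh.const_mul (xT + a0 / a1))
  have eQ := ((e2.sinh.const_mul (Real.sinh (a1 * (T - v)))).mul e3.sinh).const_mul 2
  have key := ((eN.pow 2).const_mul a1).div eQ (by simp [h1, h2, h3])
  have : (fun z => cost a0 a1 T xT z v d (ν z)) = fun z => a1 * num a0 a1 T xT z v d (ν z) ^ 2 /
      (2 * (Real.sinh (a1 * (T - v)) * Real.sinh (a1 * (T - ν z)) *
        Real.sinh (a1 * (ν z - v)))) := by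
    ext z; exact cost_eq ha1 (ht.1.trans ht.2)
  rw [this, sub_traj ha1 (ht.1.trans ht.2)]
  convert! key using 1
  simp only [Pi.mul_apply, Pi.pow_apply]
  unfold gfun at hg
  unfold num
  rw [show a1 * (2 * ν y - T - v) = a1 * (ν y - v) - a1 * (T - ν y) by ring, Real.sinh_sub] at hg
  rw [show a1 * (T - v) = a1 * (ν y - v) + a1 * (T - ν y) by ring, Real.sinh_add] at h1 ⊢
  generalize Real.sinh (a1 * (ν y - v)) = A at *
  generalize Real.sinh (a1 * (T - ν y)) = B at *
  generalize Real.cosh (a1 * (ν y - v)) = A' at *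
  generalize Real.cosh (a1 * (T - ν y)) = B' at *
  generalize a0 / a1 = b at *
  have h0 := (mul_eq_zero.1 hg).resolve_left ha1
  rw [mul_div_assoc', div_div, ← neg_div, div_eq_div_iff (by positivity) (by positivity)]
  push_cast
  linear_combination (-2 * a1 ^ 2 * ((d + b) * (A * B' + A' * B) - (y + b) * B - (xT + b) * A) *
    ν' * (A * B' + A' * B) ^ 3 * A) * h0

/-- Differentiating `g(y,v;d,ν(y)) = 0` gives `ν' = -a1 sinh (a1 (T - ν)) / g_t`. -/
lemma branch_deriv {ν : ℝ → ℝ} {y ν' : ℝ} (hν : HasDerivAt ν ν' y)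
    (hg : ∀ᶠ z in 𝓝 y, gfun a0 a1 T xT z v d (ν z) = 0) :
    a1 * Real.sinh (a1 * (T - ν y)) + gder a0 a1 T xT y v d (ν y) * ν' = 0 := by
  have e1 : HasDerivAt (fun z : ℝ => a1 * (2 * ν z - T - v)) (a1 * (2 * ν')) y :=
    (((hν.const_mul 2).sub_const T).sub_const v).const_mul a1
  have e2 : HasDerivAt (fun z : ℝ => a1 * (T - ν z)) (a1 * -ν') y :=
    (hν.const_sub T).const_mul a1
  have e3 : HasDerivAt (fun z : ℝ => a1 * (ν z - v)) (a1 * ν') y :=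
    (hν.sub_const v).const_mul a1
  have eX : HasDerivAt (fun z : ℝ => z + a0 / a1) 1 y := (hasDerivAt_id y).add_const _
  have e : HasDerivAt (fun z => gfun a0 a1 T xT z v d (ν z)) _ y :=
    (((e1.sinh.const_mul (d + a0 / a1)).add (eX.mul e2.sinh)).sub
      (e3.sinh.const_mul (xT + a0 / a1))).const_mul a1
  have e0 : HasDerivAt (fun z => gfun a0 a1 T xT z v d (ν z)) 0 y :=
    (hasDerivAt_const y (0 : ℝ)).congr_of_eventuallyEq hg
  rw [e0.unique e]
  unfold gder
  ring

/-- Derivative of the envelope formula along the branch of zeros of `g`. -/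
lemma hasDerivAt_slope {ν : ℝ → ℝ} {y ν' : ℝ} (ha1 : a1 ≠ 0) (hν : HasDerivAt ν ν' y)
    (ht : ν y ∈ Ioo v T) (hg : ∀ᶠ z in 𝓝 y, gfun a0 a1 T xT z v d (ν z) = 0)
    (hG : gder a0 a1 T xT y v d (ν y) ≠ 0) :
    HasDerivAt
      (fun y => -(a1 * (d - traj a0 a1 T xT y v (ν y)) / Real.sinh (a1 * (ν y - v))))
      (a1 ^ 3 * (d + a0 / a1) * (1 - Real.cosh (2 * a1 * (T - ν y))) /
        (Real.sinh (a1 * (T - v)) * gder a0 a1 T xT y v d (ν y))) y := by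
  have h1 := sinh_ne ha1 (sub_pos.2 (ht.1.trans ht.2))
  have h2 := sinh_ne ha1 (sub_pos.2 ht.2)
  have h3 := sinh_ne ha1 (sub_pos.2 ht.1)
  have e2 : HasDerivAt (fun z : ℝ => a1 * (T - ν z)) (a1 * -ν') y :=
    (hν.const_sub T).const_mul a1
  have e3 : HasDerivAt (fun z : ℝ => a1 * (ν z - v)) (a1 * ν') y :=
    (hν.sub_const v).const_mul a1
  have eX : HasDerivAt (fun z : ℝ => z + a0 / a1) 1 y := (hasDerivAt_id y).add_const _
  have eN : HasDerivAt (fun z => num a0 a1 T xT z v d (ν z)) _ y :=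
    ((eX.mul e2.sinh).const_sub ((d + a0 / a1) * Real.sinh (a1 * (T - v)))).sub
      (e3.sinh.const_mul (xT + a0 / a1))
  have key := (((eN.div_const (Real.sinh (a1 * (T - v)))).const_mul a1).div e3.sinh h3).neg
  simp only [sub_traj ha1 (ht.1.trans ht.2)]
  have hν' : ν' = -(a1 * Real.sinh (a1 * (T - ν y))) / gder a0 a1 T xT y v d (ν y) := by
    rw [eq_div_iff hG]
    linear_combination branch_deriv hν hg
  convert! key using 1
  have hg0 := (mul_eq_zero.1 hg.self_of_nhds).resolve_left ha1
  have hGe : gder a0 a1 T xT y v d (ν y) = gder a0 a1 T xT y v d (ν y) := rfl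
  conv_rhs at hGe => unfold gder
  generalize gder a0 a1 T xT y v d (ν y) = G at *
  subst hν'
  unfold num
  rw [show a1 * (2 * ν y - T - v) = a1 * (ν y - v) - a1 * (T - ν y) by ring,
    Real.sinh_sub] at hg0
  rw [show a1 * (2 * ν y - T - v) = a1 * (ν y - v) - a1 * (T - ν y) by ring,
    Real.cosh_sub] at hGe
  rw [show 2 * a1 * (T - ν y) = 2 * (a1 * (T - ν y)) by ring, Real.cosh_two_mul]
  rw [show a1 * (T - v) = a1 * (ν y - v) + a1 * (T - ν y) by ring, Real.sinh_add] at h1 ⊢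
  have q1 := Real.cosh_sq (a1 * (ν y - v))
  have q2 := Real.cosh_sq (a1 * (T - ν y))
  generalize Real.sinh (a1 * (ν y - v)) = A at *
  generalize Real.sinh (a1 * (T - ν y)) = B at *
  generalize Real.cosh (a1 * (ν y - v)) = A' at *
  generalize Real.cosh (a1 * (T - ν y)) = B' at *
  generalize a0 / a1 = b at *
  have k : A * G + a1 ^ 2 * (A * B' + A' * B) * ((y + b) - (d + b) * A') =
      -2 * a1 ^ 2 * (d + b) * A ^ 2 * B := by
    rw [hGe]
    linear_combination a1 ^ 2 * A' * hg0
  have k' : a1 ^ 3 * (d + b) * (1 - (B' ^ 2 + B ^ 2)) / ((A * B' + A' * B) * G) =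
      a1 * B * (A * G + a1 ^ 2 * (A * B' + A' * B) * ((y + b) - (d + b) * A')) /
        ((A * B' + A' * B) * G * A ^ 2) := by
    rw [k, q2, div_eq_div_iff (by positivity) (by positivity)]
    ring
  rw [k']
  clear k k' hGe hg0
  generalize hS : A * B' + A' * B = S at *
  field_simp
  subst hS
  ring

/-- The implicit function theorem for `g = 0`, in the analytic category. -/
lemma exists_branch {x s t₀ : ℝ} (hg : gfun a0 a1 T xT x s d t₀ = 0)
    (hG : gder a0 a1 T xT x s d t₀ ≠ 0) :
    ∃ nu : ℝ × ℝ → ℝ, nu (x, s) = t₀ ∧ ContDiffAt ℝ ⊤ nu (x, s) ∧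
      ∀ᶠ p in 𝓝 (x, s), gfun a0 a1 T xT p.1 p.2 d (nu p) = 0 := by
  let f : (ℝ × ℝ) × ℝ → ℝ := fun q => gfun a0 a1 T xT q.1.1 q.1.2 d q.2
  have hf : ContDiffAt ℝ ⊤ f ((x, s), t₀) := by
    simp only [f]; unfold gfun
    fun_prop
  have hn : (⊤ : WithTop ℕ∞) ≠ 0 := by simp
  have hinv : (fderiv ℝ f ((x, s), t₀) ∘L .inr ℝ (ℝ × ℝ) ℝ).IsInvertible := by
    refine ⟨ContinuousLinearEquiv.unitsEquivAut ℝ (Units.mk0 _ hG), ?_⟩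
    ext
    have h1 := ((hf.differentiableAt hn).hasFDerivAt).comp_hasDerivAt t₀
      ((hasDerivAt_const t₀ (x, s)).prodMk (hasDerivAt_id t₀))
    have h2 := h1.unique (hasDerivAt_gfun (a0 := a0) (a1 := a1) (T := T) (xT := xT) (y := x)
      (v := s) (d := d) (t := t₀))
    simpa using h2.symm
  refine ⟨hf.implicitFunction hn hinv, hf.implicitFunction_apply_self hn hinv,
    hf.contDiffAt_implicitFunction hn hinv, ?_⟩
  filter_upwards [hf.eventually_apply_implicitFunction hn hinv] with p hp
  exact hp.trans hg

end

/-! ### Stability of strong regularity -/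

section
variable {a0 a1 T xT d1 d2 x s dm νm : ℝ}

/-- The exit cost is the value at a minimizing pair. -/
lemma uval_eq (hd : dm = d1 ∨ dm = d2) (hν : νm ∈ Ioo s T)
    (hmin : ∀ d, (d = d1 ∨ d = d2) → ∀ t ∈ Ioo s T,
      cost a0 a1 T xT x s dm νm ≤ cost a0 a1 T xT x s d t) :
    uval a0 a1 T xT d1 d2 x s = cost a0 a1 T xT x s dm νm := by
  refine IsLeast.csInf_eq ⟨⟨dm, hd, νm, hν, rfl⟩, ?_⟩
  rintro r ⟨d, hd, t, ht, rfl⟩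
  exact hmin d hd t ht

/-- At a strongly regular point the optimal time is a zero of `g`, and `a1 N g_t > 0` there. -/
lemma StronglyRegularAt.critical (ha1 : a1 ≠ 0)
    (h : StronglyRegularAt a0 a1 T xT d1 d2 x s dm νm) :
    0 < cost a0 a1 T xT x s dm νm ∧ gfun a0 a1 T xT x s dm νm = 0 ∧
      0 < a1 * num a0 a1 T xT x s dm νm * gder a0 a1 T xT x s dm νm := by
  obtain ⟨hpos, hd, hν, hmin, -, h2⟩ := h
  rw [uval_eq hd hν hmin] at hpos
  have hs2 := sinh_ne ha1 (sub_pos.2 hν.2)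
  have hs3 := sinh_ne ha1 (sub_pos.2 hν.1)
  have hN : num a0 a1 T xT x s dm νm ≠ 0 := by
    intro h0
    rw [cost_eq ha1 (hν.1.trans hν.2), h0] at hpos
    simp at hpos
  have hloc : IsLocalMin (fun t => cost a0 a1 T xT x s dm t) νm := by
    filter_upwards [Ioo_mem_nhds hν.1 hν.2] with t ht using hmin dm hd t ht
  have hg : gfun a0 a1 T xT x s dm νm = 0 := by
    have := hloc.hasDerivAt_eq_zero (hasDerivAt_cost ha1 hν)
    simpa [ha1, hN, hs2, hs3] using this
  refine ⟨hpos, hg, ?_⟩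
  rw [deriv_deriv_cost ha1 hν hg] at h2
  exact (div_pos_iff_of_pos_right (by positivity)).1 h2

lemma contDiffAt_value {d : ℝ} {nu : ℝ × ℝ → ℝ} {p : ℝ × ℝ} (ha1 : a1 ≠ 0)
    (hnu : ContDiffAt ℝ ⊤ nu p) (hp : nu p ∈ Ioo p.2 T) :
    ContDiffAt ℝ ⊤ (fun p : ℝ × ℝ => cost a0 a1 T xT p.1 p.2 d (nu p)) p := by
  have h1 := sinh_ne ha1 (sub_pos.2 (hp.1.trans hp.2))
  have h2 := sinh_ne ha1 (sub_pos.2 hp.2)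
  have h3 := sinh_ne ha1 (sub_pos.2 hp.1)
  have h4 : 2 * Real.sinh (a1 * (T - nu p)) * Real.sinh (a1 * (nu p - p.2)) ≠ 0 := by positivity
  unfold cost traj
  fun_prop (disch := assumption)

lemma continuous_num {d : ℝ} :
    Continuous fun q : (ℝ × ℝ) × ℝ => num a0 a1 T xT q.1.1 q.1.2 d q.2 := by
  unfold num; fun_prop

lemma continuous_gder {d : ℝ} :
    Continuous fun q : (ℝ × ℝ) × ℝ => gder a0 a1 T xT q.1.1 q.1.2 d q.2 := by
  unfold gder; fun_prop

/-- Near the base point and the optimal time, the branch of zeros of `g` is the strict minimum in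
time of the cost to the optimal exit position. -/
lemma eventually_local_min (ha1 : a1 ≠ 0) (hν : νm ∈ Ioo s T)
    (hpos : 0 < a1 * num a0 a1 T xT x s dm νm * gder a0 a1 T xT x s dm νm)
    {nu : ℝ × ℝ → ℝ} (hnu0 : nu (x, s) = νm) (hnu : ContinuousAt nu (x, s))
    (hg : ∀ᶠ p in 𝓝 (x, s), gfun a0 a1 T xT p.1 p.2 dm (nu p) = 0) :
    ∀ᶠ q : (ℝ × ℝ) × ℝ in 𝓝 ((x, s), νm), q.2 ≠ nu q.1 →
      cost a0 a1 T xT q.1.1 q.1.2 dm (nu q.1) < cost a0 a1 T xT q.1.1 q.1.2 dm q.2 := by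
  set k := gder a0 a1 T xT x s dm νm with hk
  have e1 : ∀ᶠ q : (ℝ × ℝ) × ℝ in 𝓝 ((x, s), νm), q.2 ∈ Ioo q.1.2 T :=
    ((isOpen_lt (f := fun q : (ℝ × ℝ) × ℝ => q.1.2) (g := fun q => q.2)
      (by fun_prop) (by fun_prop)).eventually_mem hν.1).and
    ((isOpen_lt (f := fun q : (ℝ × ℝ) × ℝ => q.2) (g := fun _ => T)
      (by fun_prop) (by fun_prop)).eventually_mem hν.2)
  have e2 : ∀ᶠ q : (ℝ × ℝ) × ℝ in 𝓝 ((x, s), νm),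
      0 < a1 * num a0 a1 T xT q.1.1 q.1.2 dm q.2 * k :=
    (((continuous_num.const_mul a1).mul_const k).continuousAt).eventually (lt_mem_nhds hpos)
  have e3 : ∀ᶠ q : (ℝ × ℝ) × ℝ in 𝓝 ((x, s), νm),
      0 < gder a0 a1 T xT q.1.1 q.1.2 dm q.2 * k :=
    ((continuous_gder.mul_const k).continuousAt).eventually
      (lt_mem_nhds (mul_self_pos.2 (right_ne_zero_of_mul hpos.ne')))
  have e := e1.and (e2.and e3)
  rw [nhds_prod_eq, eventually_prod_iff] at e
  obtain ⟨pa, hpa, pb, hpb, hab⟩ := e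
  obtain ⟨l, u, hlu, hIoo⟩ := mem_nhds_iff_exists_Ioo_subset.1 hpb
  have hnuI : ∀ᶠ p in 𝓝 (x, s), nu p ∈ Ioo l u :=
    hnu.eventually (by rw [hnu0]; exact Ioo_mem_nhds hlu.1 hlu.2)
  rw [nhds_prod_eq]
  refine eventually_prod_iff.2 ⟨_, hpa.and (hnuI.and hg), _, Ioo_mem_nhds hlu.1 hlu.2, ?_⟩
  rintro p ⟨hp, hpI, hpg⟩ t ht hne
  exact cost_strict_min ha1 (I := Ioo l u) ordConnected_Ioo
    (fun τ hτ => (hab hp (hIoo hτ)).1) hpI hpg (fun τ hτ => (hab hp (hIoo hτ)).2.1)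
    (fun τ hτ => (hab hp (hIoo hτ)).2.2) ht hne

/-- Away from the optimal pair, the cost stays above the value along the branch near every time
`t₀ ∈ [s, T]`, including the endpoints. -/
lemma eventually_far {d t₀ : ℝ} (ha1 : a1 ≠ 0) (hsT : s < T)
    {c : ℝ × ℝ → ℝ} (hc : ContinuousAt c (x, s)) (hdx : d ≠ x) (hdT : d ≠ xT)
    (ht₀ : t₀ ∈ Icc s T) (hlt : t₀ ∈ Ioo s T → c (x, s) < cost a0 a1 T xT x s d t₀) :
    ∀ᶠ q : (ℝ × ℝ) × ℝ in 𝓝 ((x, s), t₀), q.2 ∈ Ioo q.1.2 T →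
      c q.1 < cost a0 a1 T xT q.1.1 q.1.2 d q.2 := by
  let H : (ℝ × ℝ) × ℝ → ℝ := fun q => a1 ^ 2 * num a0 a1 T xT q.1.1 q.1.2 d q.2 ^ 2 -
      2 * c q.1 * (a1 * (Real.sinh (a1 * (T - q.1.2)) * Real.sinh (a1 * (T - q.2)) *
        Real.sinh (a1 * (q.2 - q.1.2))))
  have hc' : ContinuousAt (fun q : (ℝ × ℝ) × ℝ => c q.1) ((x, s), t₀) :=
    ContinuousAt.comp (f := fun q : (ℝ × ℝ) × ℝ => q.1) (x := ((x, s), t₀)) hc continuousAt_fst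
  have hH : ContinuousAt H ((x, s), t₀) := by
    have := continuous_num (a0 := a0) (a1 := a1) (T := T) (xT := xT) (d := d)
    exact ContinuousAt.sub ((this.pow 2).const_mul _).continuousAt
      ((hc'.const_mul 2).mul (by fun_prop))
  have hS := sinh_ne ha1 (sub_pos.2 hsT)
  have h0 : 0 < H ((x, s), t₀) := by
    rcases eq_endpoints_or_mem_Ioo_of_mem_Icc ht₀ with rfl | rfl | h
    · have hN : num a0 a1 T xT x t₀ d t₀ = (d - x) * Real.sinh (a1 * (T - t₀)) := by
        simp [num]; ring
      have := sub_ne_zero.2 hdx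
      simp only [H, hN, sub_self, mul_zero, Real.sinh_zero, sub_zero]
      positivity
    · have hN : num a0 a1 t₀ xT x s d t₀ = (d - xT) * Real.sinh (a1 * (t₀ - s)) := by
        simp [num]; ring
      have := sub_ne_zero.2 hdT
      simp only [H, hN, sub_self, mul_zero, zero_mul, Real.sinh_zero, sub_zero]
      positivity
    · exact (lt_cost_iff ha1 h _).1 (hlt h)
  filter_upwards [hH.eventually (lt_mem_nhds h0)] with q hq hqI
  exact (lt_cost_iff ha1 hqI _).2 hq

/-- Stability of strong regularity along the branch of zeros of `g`. Uniqueness of the minimizer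
holds near each single time by the two preceding lemmas, hence uniformly in time by compactness of
a time interval containing all `[v, T]` with `v` close to `s`. -/
lemma eventually_regular (ha1 : a1 ≠ 0) (h1 : d1 < xT) (h2 : xT < d2)
    (hx : x ∈ Ioo d1 d2) (hsT : s < T)
    (hreg : StronglyRegularAt a0 a1 T xT d1 d2 x s dm νm)
    {nu : ℝ × ℝ → ℝ} (hnu0 : nu (x, s) = νm) (hnu : ContDiffAt ℝ ⊤ nu (x, s))
    (hg : ∀ᶠ p in 𝓝 (x, s), gfun a0 a1 T xT p.1 p.2 dm (nu p) = 0) :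
    ∀ᶠ p in 𝓝 (x, s), StronglyRegularAt a0 a1 T xT d1 d2 p.1 p.2 dm (nu p) := by
  obtain ⟨hc0, -, hpos⟩ := hreg.critical ha1
  obtain ⟨-, hdm, hν, -, hstrict, -⟩ := hreg
  have hcont := hnu.continuousAt
  have hval : ContinuousAt (fun p : ℝ × ℝ => cost a0 a1 T xT p.1 p.2 dm (nu p)) (x, s) :=
    (contDiffAt_value ha1 hnu (by rw [hnu0]; exact hν)).continuousAt
  have hloc := eventually_local_min ha1 hν hpos hnu0 hcont hg
  have hpt : ∀ d, (d = d1 ∨ d = d2) → ∀ t₀ ∈ Icc (s - 1) T,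
      ∀ᶠ q : (ℝ × ℝ) × ℝ in 𝓝 ((x, s), t₀), q.2 ∈ Ioo q.1.2 T → (d, q.2) ≠ (dm, nu q.1) →
        cost a0 a1 T xT q.1.1 q.1.2 dm (nu q.1) < cost a0 a1 T xT q.1.1 q.1.2 d q.2 := by
    intro d hd t₀ ht₀
    rcases lt_or_ge t₀ s with hlt | hge
    · -- here `q.2 ∈ (q.1.2, T)` fails near `((x, s), t₀)`
      filter_upwards [(isOpen_lt (f := fun q : (ℝ × ℝ) × ℝ => q.2) (g := fun q => q.1.2)
        (by fun_prop) (by fun_prop)).eventually_mem (show t₀ < s from hlt)] with q hq hqI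
      exact absurd hqI.1 (not_lt.2 (le_of_lt hq))
    · by_cases heq : (d, t₀) = (dm, νm)
      · obtain ⟨rfl, rfl⟩ := Prod.mk.inj heq
        filter_upwards [hloc] with q hq _ hne
        exact hq fun h => hne (by rw [h])
      · have hdx : d ≠ x := by
          rcases hd with rfl | rfl
          · exact hx.1.ne
          · exact hx.2.ne'
        have hdT : d ≠ xT := by
          rcases hd with rfl | rfl
          · exact h1.ne
          · exact h2.ne'
        filter_upwards [eventually_far ha1 hsT hval hdx hdT ⟨hge, ht₀.2⟩
          (fun h => by simpa [hnu0] using hstrict d hd t₀ h heq)] with q hq hqI _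
        exact hq hqI
  have hall : ∀ d, (d = d1 ∨ d = d2) → ∀ᶠ p in 𝓝 (x, s), ∀ t ∈ Icc (s - 1) T,
      t ∈ Ioo p.2 T → (d, t) ≠ (dm, nu p) →
        cost a0 a1 T xT p.1 p.2 dm (nu p) < cost a0 a1 T xT p.1 p.2 d t := fun d hd =>
    isCompact_Icc.eventually_forall_of_forall_eventually (hpt d hd)
  have hpos' : ∀ᶠ p : ℝ × ℝ in 𝓝 (x, s), 0 < a1 * num a0 a1 T xT p.1 p.2 dm (nu p) *
      gder a0 a1 T xT p.1 p.2 dm (nu p) := by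
    have hq : ContinuousAt (fun p : ℝ × ℝ => a1 * num a0 a1 T xT p.1 p.2 dm (nu p) *
        gder a0 a1 T xT p.1 p.2 dm (nu p)) (x, s) := by
      unfold num gder
      fun_prop
    exact hq.eventually (lt_mem_nhds (by simpa [hnu0] using hpos))
  have hI : ∀ᶠ p : ℝ × ℝ in 𝓝 (x, s), nu p ∈ Ioo p.2 T :=
    (continuousAt_snd.eventually_lt hcont (by rw [hnu0]; exact hν.1)).and
      (hcont.eventually_lt continuousAt_const (by rw [hnu0]; exact hν.2))
  have hs1 : ∀ᶠ p : ℝ × ℝ in 𝓝 (x, s), s - 1 < p.2 :=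
    continuousAt_const.eventually_lt continuousAt_snd (by simp)
  filter_upwards [hall d1 (.inl rfl), hall d2 (.inr rfl), hpos', hI, hs1, hg,
    hval.eventually (lt_mem_nhds (by simpa [hnu0] using hc0))] with p ha hb hp hpI hps hpg hpc
  have hst : ∀ d, (d = d1 ∨ d = d2) → ∀ t ∈ Ioo p.2 T, (d, t) ≠ (dm, nu p) →
      cost a0 a1 T xT p.1 p.2 dm (nu p) < cost a0 a1 T xT p.1 p.2 d t := by
    rintro d hd t ht hne
    have ht' : t ∈ Icc (s - 1) T := ⟨(hps.trans ht.1).le, ht.2.le⟩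
    rcases hd with rfl | rfl
    · exact ha t ht' ht hne
    · exact hb t ht' ht hne
  have hle : ∀ d, (d = d1 ∨ d = d2) → ∀ t ∈ Ioo p.2 T,
      cost a0 a1 T xT p.1 p.2 dm (nu p) ≤ cost a0 a1 T xT p.1 p.2 d t := by
    intro d hd t ht
    by_cases heq : (d, t) = (dm, nu p)
    · obtain ⟨rfl, rfl⟩ := Prod.mk.inj heq
      exact le_rfl
    · exact (hst d hd t ht heq).le
  refine ⟨by rw [uval_eq hdm hpI hle]; exact hpc, hdm, hpI, hle, hst, ?_⟩
  rw [deriv_deriv_cost ha1 hpI hpg]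
  have := sinh_ne ha1 (sub_pos.2 hpI.2)
  have := sinh_ne ha1 (sub_pos.2 hpI.1)
  positivity

end

theorem stmt_15 (a0 a1 T xT d1 d2 : ℝ) (ha1 : a1 ≠ 0) (hT : 0 < T)
    (h1 : d1 < xT) (h2 : xT < d2)
    (x s dstar nustar : ℝ) (hx : x ∈ Set.Ioo d1 d2) (hs0 : 0 ≤ s) (hsT : s < T)
    (hreg : StronglyRegularAt a0 a1 T xT d1 d2 x s dstar nustar) :
    ∃ U : Set (ℝ × ℝ), (x, s) ∈ U ∧
      U ⊆ Set.Ioo d1 d2 ×ˢ Set.Ico 0 T ∧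
      (∃ V : Set (ℝ × ℝ), IsOpen V ∧ U = V ∩ Set.Ioo d1 d2 ×ˢ Set.Ico 0 T) ∧
      ∃ nu : ℝ × ℝ → ℝ,
        (∀ p ∈ U, StronglyRegularAt a0 a1 T xT d1 d2 p.1 p.2 dstar (nu p)) ∧
        ContDiffOn ℝ (⊤ : ℕ∞) nu U ∧
        ContDiffOn ℝ (⊤ : ℕ∞) (fun p : ℝ × ℝ => uval a0 a1 T xT d1 d2 p.1 p.2) U ∧
        ∀ p ∈ U,
          deriv (fun y => uval a0 a1 T xT d1 d2 y p.2) p.1 =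
            -(a1 * (dstar - traj a0 a1 T xT p.1 p.2 (nu p)) /
              Real.sinh (a1 * (nu p - p.2))) ∧
          deriv (deriv (fun y => uval a0 a1 T xT d1 d2 y p.2)) p.1 =
            a1 ^ 3 * (dstar + a0 / a1) * (1 - Real.cosh (2 * a1 * (T - nu p))) /
              (Real.sinh (a1 * (T - p.2)) *
                deriv (fun t => gfun a0 a1 T xT p.1 p.2 dstar t) (nu p)) := by
  obtain ⟨-, hg0, hpos⟩ := hreg.critical ha1
  obtain ⟨nu, hnu0, hnu, hg⟩ := exists_branch hg0 (right_ne_zero_of_mul (ne_of_gt hpos))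
  -- analyticity at a point propagates to a neighbourhood, unlike `C^∞` regularity at a point
  have hev := (eventually_regular ha1 h1 h2 hx hsT hreg hnu0 hnu hg).and
    ((hnu.eventually (by simp)).and hg)
  obtain ⟨V, hV, hVo, hxV⟩ := eventually_nhds_iff.1 hev
  have hu : ∀ p ∈ V, uval a0 a1 T xT d1 d2 p.1 p.2 = cost a0 a1 T xT p.1 p.2 dstar (nu p) :=
    fun p hp => let h := (hV p hp).1; uval_eq h.2.1 h.2.2.1 h.2.2.2.1
  refine ⟨V ∩ Set.Ioo d1 d2 ×ˢ Set.Ico 0 T, ⟨hxV, hx, hs0, hsT⟩, inter_subset_right,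
    ⟨V, hVo, rfl⟩, nu, fun p hp => (hV p hp.1).1,
    fun p hp => ((hV p hp.1).2.1.of_le le_top).contDiffWithinAt, ?_, ?_⟩
  · refine ContDiffOn.congr (f := fun p : ℝ × ℝ => cost a0 a1 T xT p.1 p.2 dstar (nu p))
      (fun p hp => ?_) (fun p hp => hu p hp.1)
    exact ((contDiffAt_value ha1 (hV p hp.1).2.1 (hV p hp.1).1.2.2.1).of_le
      le_top).contDiffWithinAt
  · rintro ⟨y, v⟩ ⟨hp, -⟩
    have hline : ∀ y, (y, v) ∈ V → ∀ᶠ z in 𝓝 y, (z, v) ∈ V := fun y hy =>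
      (Continuous.prodMk_left v).continuousAt.eventually (hVo.mem_nhds hy)
    have hnud : ∀ y, (y, v) ∈ V →
        HasDerivAt (fun z => nu (z, v)) (deriv (fun z => nu (z, v)) y) y := fun y hy =>
      (((hV _ hy).2.1.differentiableAt (by simp)).comp (f := fun z : ℝ => (z, v)) y
        (by fun_prop)).hasDerivAt
    have hfirst : ∀ y, (y, v) ∈ V → deriv (fun y => uval a0 a1 T xT d1 d2 y v) y =
        -(a1 * (dstar - traj a0 a1 T xT y v (nu (y, v))) /
          Real.sinh (a1 * (nu (y, v) - v))) := fun y hy => by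
      refine HasDerivAt.deriv (HasDerivAt.congr_of_eventuallyEq
        (hasDerivAt_value (ν := fun z => nu (z, v)) ha1 (hnud y hy) (hV _ hy).1.2.2.1
          (hV _ hy).2.2) ?_)
      filter_upwards [hline y hy] with z hz using hu _ hz
    refine ⟨hfirst y hp, ?_⟩
    rw [hasDerivAt_gfun.deriv]
    refine HasDerivAt.deriv (HasDerivAt.congr_of_eventuallyEq
      (hasDerivAt_slope (ν := fun z => nu (z, v)) ha1 (hnud y hp) (hV _ hp).1.2.2.1 ?_ ?_) ?_)
    · filter_upwards [hline y hp] with z hz using (hV _ hz).2.2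
    · exact right_ne_zero_of_mul ((hV _ hp).1.critical ha1).2.2.ne'
    · filter_upwards [hline y hp] with z hz using hfirst z hz
end
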